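/- arXiv:1811.01740 — 5 statements merged into one kernel-verified Lean document; each statement's English description precedes it below -/
import Mathlib

section
/- Let N ≥ 1 and let t be any list of memory blocks. For every block x: x belongs to lruRun N [] t if and only if t can be written as t = t₁ ++ [x] ++ t₂ where x does not occur in t₂ and the number of distinct blocks occurring in t₂ is at most N − 1 (i.e. t₂.toFinset.card ≤ N − 1). -/
/-- One access to an LRU cache of associativity `N`: rejuvenate on a hit,
append on a miss, evicting the oldest block if the cache is full. -/
def lruAccess {B : Type*} [DecidableEq B] (N : ℕ) (w : List B) (a : B) : List B :=
  if a ∈ w then w.erase a ++ [a]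
  else if w.length < N then w ++ [a]
  else w.tail ++ [a]

/-- Process a list of accesses in order, starting from state `w`. -/
def lruRun {B : Type*} [DecidableEq B] (N : ℕ) (w t : List B) : List B :=
  t.foldl (lruAccess N) w

/-!
`List.dedup` keeps the *last* occurrence of each entry, so `t.dedup` lists the blocks of `t` in the
order of their most recent accesses, oldest first. Accessing `a` changes it to
`t.dedup.erase a ++ [a]`, and the LRU update is this operation seen through the last `N` entries.
Hence the cache always consists of the last `N` entries of `t.dedup`. The entries of `t.dedup` after
`x` are the distinct blocks accessed since the last access to `x`, so `x` is cached exactly when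
there are fewer than `N` of them.
-/

section Rtake

variable {α : Type*} {l : List α} {n : ℕ}

theorem length_rtake (l : List α) (n : ℕ) : (l.rtake n).length = min n l.length := by
  rw [List.rtake, List.length_drop, Nat.sub_sub_eq_min, min_comm]

theorem rdrop_append_rtake (l : List α) (n : ℕ) : l.rdrop n ++ l.rtake n = l :=
  List.take_append_drop _ _

theorem rtake_of_length_le (h : l.length ≤ n) : l.rtake n = l := by
  rw [List.rtake, Nat.sub_eq_zero_of_le h, List.drop_zero]

theorem rtake_append_of_le_length {l₂ : List α} (l₁ : List α) (h : n ≤ l₂.length) :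
    (l₁ ++ l₂).rtake n = l₂.rtake n := by
  rw [List.rtake, List.rtake, List.length_append, Nat.add_sub_assoc h, List.drop_length_add_append]

theorem tail_rtake_succ (h : n < l.length) : (l.rtake (n + 1)).tail = l.rtake n := by
  rw [List.rtake, List.rtake, List.tail_drop]
  congr 1
  omega

theorem mem_rtake_append_cons_iff {l₂ : List α} {x : α} (l₁ : List α) (hx : x ∉ l₂) :
    x ∈ (l₁ ++ x :: l₂).rtake n ↔ l₂.length < n := by
  classical
  have hidx : (l₁ ++ x :: l₂).reverse.idxOf x = l₂.length := by
    simp [List.idxOf_append_of_notMem, hx]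
  rw [List.rtake_eq_reverse_take_reverse, List.mem_reverse,
    List.mem_take_iff_idxOf_lt (by simp), hidx]

theorem exists_eq_append_cons_of_mem_right {x : α} (hx : x ∈ l) :
    ∃ l₁ l₂, l = l₁ ++ x :: l₂ ∧ x ∉ l₂ := by
  obtain ⟨r₁, r₂, hr, hxr⟩ := List.eq_append_cons_of_mem (List.mem_reverse.2 hx)
  refine ⟨r₂.reverse, r₁.reverse, ?_, mt List.mem_reverse.1 hxr⟩
  rw [← List.reverse_reverse l, hr, List.reverse_append, List.reverse_cons, List.append_assoc,
    List.singleton_append]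

variable [DecidableEq α] {a : α}

theorem rtake_erase_of_notMem (ha : a ∉ l.rtake n) : (l.erase a).rtake n = l.rtake n := by
  by_cases hal : a ∈ l
  · have hadrop : a ∈ l.rdrop n := by
      rw [← rdrop_append_rtake l n, List.mem_append] at hal
      exact hal.resolve_right ha
    have hn : n ≤ l.length := by
      by_contra! hlt
      exact ha (by rwa [rtake_of_length_le hlt.le])
    have hlen : (l.rtake n).length = n := by rw [length_rtake, min_eq_left hn]
    have herase : l.erase a = (l.rdrop n).erase a ++ l.rtake n := by
      conv_lhs => rw [← rdrop_append_rtake l n]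
      exact List.erase_append_left _ hadrop
    rw [herase, rtake_append_of_le_length _ hlen.ge, rtake_of_length_le hlen.le]
  · rw [List.erase_of_not_mem hal]

theorem rtake_erase_of_mem_rtake_succ (hl : l.Nodup) (ha : a ∈ l.rtake (n + 1)) :
    (l.erase a).rtake n = (l.rtake (n + 1)).erase a := by
  rcases lt_or_ge n l.length with hn | hn
  · have hdisj : (l.rdrop (n + 1)).Disjoint (l.rtake (n + 1)) :=
      List.disjoint_of_nodup_append ((rdrop_append_rtake l (n + 1)).symm ▸ hl)
    have herase : l.erase a = l.rdrop (n + 1) ++ (l.rtake (n + 1)).erase a := by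
      conv_lhs => rw [← rdrop_append_rtake l (n + 1)]
      exact List.erase_append_right _ fun h => hdisj h ha
    have hlen : ((l.rtake (n + 1)).erase a).length = n := by
      rw [List.length_erase_of_mem ha, length_rtake, min_eq_left hn, Nat.add_sub_cancel]
    rw [herase, rtake_append_of_le_length _ hlen.ge, rtake_of_length_le hlen.le]
  · rw [rtake_of_length_le (hn.trans n.le_succ),
      rtake_of_length_le (List.length_erase_le.trans hn)]

end Rtake

section Dedup

variable {α : Type*} [DecidableEq α]

theorem dedup_concat (l : List α) (a : α) : (l ++ [a]).dedup = l.dedup.erase a ++ [a] := by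
  induction l with
  | nil => simp
  | cons b l ih =>
    rw [List.cons_append]
    by_cases hb : b ∈ l
    · rw [List.dedup_cons_of_mem (List.mem_append_left _ hb), List.dedup_cons_of_mem hb, ih]
    · rw [List.dedup_cons_of_notMem hb]
      rcases eq_or_ne b a with rfl | hba
      · rw [List.dedup_cons_of_mem List.mem_concat_self, ih, List.erase_cons_head,
          List.erase_of_not_mem (mt List.mem_dedup.1 hb)]
      · have hba' : b ∉ l ++ [a] := by simp [hb, hba]
        rw [List.dedup_cons_of_notMem hba', ih, List.erase_cons_tail (by simpa using hba),
          List.cons_append]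

theorem exists_dedup_append_cons_eq {l₂ : List α} {x : α} (l₁ : List α) (hx : x ∉ l₂) :
    ∃ l, (l₁ ++ x :: l₂).dedup = l ++ x :: l₂.dedup := by
  rw [List.dedup_append, List.dedup_cons_of_notMem hx]
  obtain ⟨l, hl⟩ := List.suffix_union_right l₁ (x :: l₂.dedup)
  exact ⟨l, hl.symm⟩

theorem mem_rtake_dedup_append_cons_iff {l₂ : List α} {x : α} {n : ℕ} (l₁ : List α)
    (hx : x ∉ l₂) : x ∈ (l₁ ++ x :: l₂).dedup.rtake n ↔ l₂.toFinset.card < n := by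
  obtain ⟨l, hl⟩ := exists_dedup_append_cons_eq l₁ hx
  rw [hl, mem_rtake_append_cons_iff l (mt List.mem_dedup.1 hx), List.card_toFinset]

theorem mem_rtake_dedup_iff {l : List α} {x : α} {n : ℕ} :
    x ∈ l.dedup.rtake n ↔
      ∃ l₁ l₂, l = l₁ ++ x :: l₂ ∧ x ∉ l₂ ∧ l₂.toFinset.card < n := by
  constructor
  · intro h
    have hxl : x ∈ l := List.mem_dedup.1 (List.mem_of_mem_drop h)
    obtain ⟨l₁, l₂, rfl, hx⟩ := exists_eq_append_cons_of_mem_right hxl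
    exact ⟨l₁, l₂, rfl, hx, (mem_rtake_dedup_append_cons_iff l₁ hx).1 h⟩
  · rintro ⟨l₁, l₂, rfl, hx, hcard⟩
    exact (mem_rtake_dedup_append_cons_iff l₁ hx).2 hcard

end Dedup

section LRU

variable {B : Type*} [DecidableEq B]

theorem lruAccess_rtake {N : ℕ} (hN : 1 ≤ N) {l : List B} (hl : l.Nodup) (a : B) :
    lruAccess N (l.rtake N) a = (l.erase a ++ [a]).rtake N := by
  obtain ⟨n, rfl⟩ := Nat.exists_eq_add_of_le' hN
  rw [List.rtake_concat_succ, lruAccess]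
  split_ifs with ha hlen
  · rw [rtake_erase_of_mem_rtake_succ hl ha]
  · have hln : l.length ≤ n := by
      rw [length_rtake] at hlen
      omega
    rw [rtake_of_length_le (hln.trans n.le_succ)] at ha ⊢
    rw [List.erase_of_not_mem ha, rtake_of_length_le hln]
  · have hnl : n < l.length := by
      rw [length_rtake] at hlen
      omega
    have htail : (l.rtake (n + 1)).tail = l.rtake n := tail_rtake_succ hnl
    have ha' : a ∉ l.rtake n := fun h => ha (List.mem_of_mem_tail (htail ▸ h))
    rw [htail, rtake_erase_of_notMem ha']

theorem lruRun_rtake_dedup {N : ℕ} (hN : 1 ≤ N) (l t : List B) :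
    lruRun N (l.dedup.rtake N) t = (l ++ t).dedup.rtake N := by
  induction t generalizing l with
  | nil => rw [List.append_nil, lruRun, List.foldl_nil]
  | cons a t ih =>
    calc lruRun N (l.dedup.rtake N) (a :: t)
        = lruRun N (lruAccess N (l.dedup.rtake N) a) t := rfl
      _ = lruRun N ((l ++ [a]).dedup.rtake N) t := by
        rw [lruAccess_rtake hN (List.nodup_dedup l), dedup_concat]
      _ = (l ++ a :: t).dedup.rtake N := by rw [ih, List.append_assoc, List.singleton_append]

theorem lruRun_nil_eq_rtake_dedup {N : ℕ} (hN : 1 ≤ N) (t : List B) :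
    lruRun N [] t = t.dedup.rtake N := by
  simpa only [List.dedup_nil, List.rtake_nil, List.nil_append] using lruRun_rtake_dedup hN [] t

end LRU

/-- a block `x` is in the LRU cache after running trace `t` from
the empty cache iff `x` occurs in `t` and at most `N - 1` distinct blocks are
accessed after the last access to `x`. -/
theorem lru_mem_iff {B : Type*} [DecidableEq B] (N : ℕ) (hN : 1 ≤ N)
    (t : List B) (x : B) :
    x ∈ lruRun N ([] : List B) t ↔
      ∃ t₁ t₂ : List B, t = t₁ ++ [x] ++ t₂ ∧ x ∉ t₂ ∧ t₂.toFinset.card ≤ N - 1 := by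
  simp_rw [lruRun_nil_eq_rtake_dedup hN, mem_rtake_dedup_iff, Nat.le_sub_one_iff_lt hN,
    List.append_assoc, List.singleton_append]
end

section
/- Let n m : ℕ and let C : Fin m → Finset (Fin n × Bool) be a CNF formula over n Boolean variables, where clause j is the set of literals C j and a literal (i,b) is satisfied by a valuation v : Fin n → Bool iff v i = b. Work over the block type consisting of a distinguished block X together with blocks L(i,b) for (i,b) ∈ Fin n × Bool. Then the following are equivalent: (1) there is a valuation v : Fin n → Bool such that every clause C j contains a literal satisfied by v; (2) there exist f : Fin n → Bool and g : Fin m → Fin n × Bool with g j ∈ C j for every j, such that X ∈ lruRun (n+1) [] (X :: (List.ofFn (fun i => L(i, f i)) ++ List.ofFn (fun j => L(g j)))). (This is the correctness of the reduction from CNF-SAT to the LRU exist-hit problem: the access traces in (2) are exactly the traces through the constructed acyclic control-flow graph.) -/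
/-!
The first `n + 1` accesses fill the cache exactly, with `X` oldest and one literal per variable
behind it. From then on `X` stays oldest as long as every access is a hit, and the first miss
evicts it for good. So `X` survives iff every chosen literal `g j` is among the literals
`(i, f i)`, that is, iff the valuation `f` satisfies all of them.
-/

section LRU

variable {B : Type*} [DecidableEq B] {N : ℕ} {a x : B} {s t w : List B}

theorem lruAccess_of_mem (ha : a ∈ w) : lruAccess N w a = w.erase a ++ [a] :=
  if_pos ha

theorem lruAccess_of_notMem_of_length_lt (ha : a ∉ w) (hw : w.length < N) :
    lruAccess N w a = w ++ [a] := by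
  rw [lruAccess, if_neg ha, if_pos hw]

theorem lruAccess_of_notMem_of_le_length (ha : a ∉ w) (hw : N ≤ w.length) :
    lruAccess N w a = w.tail ++ [a] := by
  rw [lruAccess, if_neg ha, if_neg hw.not_gt]

theorem lruAccess_subset (N : ℕ) (w : List B) (a : B) : lruAccess N w a ⊆ w ++ [a] := by
  unfold lruAccess
  split_ifs
  · exact (List.erase_sublist.append_right [a]).subset
  · exact List.Subset.refl _
  · exact ((List.tail_sublist w).append_right [a]).subset

theorem lruRun_cons (N : ℕ) (w : List B) (a : B) (t : List B) :
    lruRun N w (a :: t) = lruRun N (lruAccess N w a) t :=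
  rfl

theorem lruRun_append (N : ℕ) (w s t : List B) :
    lruRun N w (s ++ t) = lruRun N (lruRun N w s) t :=
  List.foldl_append

theorem lruRun_subset (N : ℕ) (w t : List B) : lruRun N w t ⊆ w ++ t := by
  induction t generalizing w with
  | nil => exact List.subset_append_left w []
  | cons a t ih =>
    have haccess : lruAccess N w a ++ t ⊆ w ++ [a] ++ t :=
      List.append_subset_of_subset_of_subset
        (List.subset_append_of_subset_left t (lruAccess_subset N w a))
        (List.subset_append_right _ t)
    rw [lruRun_cons, List.append_cons]
    exact List.Subset.trans (ih _) haccess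

theorem lruRun_eq_append (ht : t.Nodup) (hwt : w.Disjoint t) (hN : (w ++ t).length ≤ N) :
    lruRun N w t = w ++ t := by
  induction t generalizing w with
  | nil => exact (List.append_nil w).symm
  | cons a t ih =>
    obtain ⟨hat, ht⟩ := List.nodup_cons.mp ht
    obtain ⟨haw, hwt⟩ := List.disjoint_cons_right.mp hwt
    have hlt : w.length < N := by
      rw [List.length_append, List.length_cons] at hN
      lia
    have hdisj : (w ++ [a]).Disjoint t :=
      List.disjoint_append_left.mpr ⟨hwt, List.singleton_disjoint.mpr hat⟩
    rw [List.append_cons] at hN ⊢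
    rw [lruRun_cons, lruAccess_of_notMem_of_length_lt haw hlt, ih ht hdisj hN]

theorem mem_lruRun_cons_iff_subset (hs : x ∉ s) (ht : x ∉ t) (hN : N ≤ s.length + 1) :
    x ∈ lruRun N (x :: s) t ↔ t ⊆ s := by
  induction t generalizing s with
  | nil => simp [lruRun]
  | cons a t ih =>
    obtain ⟨hxa, ht⟩ := List.ne_and_not_mem_of_not_mem_cons ht
    rw [lruRun_cons, List.cons_subset]
    by_cases ha : a ∈ s
    · have hit : lruAccess N (x :: s) a = x :: (s.erase a ++ [a]) := by
        rw [lruAccess_of_mem (List.mem_cons_of_mem x ha),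
          List.erase_cons_tail (beq_iff_eq.not.mpr hxa), List.cons_append]
      have perm : (s.erase a ++ [a]).Perm s :=
        (List.perm_append_singleton a _).trans (List.perm_cons_erase ha).symm
      rw [hit, ih (perm.mem_iff.not.mpr hs) ht (perm.length_eq.symm ▸ hN), perm.subset_congr_right,
        and_iff_right ha]
    · have miss : lruAccess N (x :: s) a = s ++ [a] :=
        lruAccess_of_notMem_of_le_length (List.not_mem_cons_of_ne_of_not_mem hxa.symm ha) hN
      have evicted : x ∉ lruRun N (s ++ [a]) t := fun hx => by
        simpa [hs, hxa, ht] using lruRun_subset N _ _ hx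
      rw [miss]
      exact iff_of_false evicted fun h => ha h.1

theorem mem_lruRun_nil_cons_append_iff_subset (hs : (x :: s).Nodup) (ht : x ∉ t) :
    x ∈ lruRun (s.length + 1) [] (x :: (s ++ t)) ↔ t ⊆ s := by
  have fill : lruRun (s.length + 1) [] (x :: s) = x :: s :=
    lruRun_eq_append hs (List.disjoint_nil_left _) le_rfl
  rw [← List.cons_append, lruRun_append, fill,
    mem_lruRun_cons_iff_subset (List.nodup_cons.mp hs).1 ht le_rfl]

end LRU

section Reduction

variable {B α : Type*} [DecidableEq B] {n m : ℕ} {X : B} {L : Fin n × α → B}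

theorem mem_lruRun_ofFn_append_ofFn_iff (hL : Function.Injective L) (hX : ∀ l, L l ≠ X)
    (f : Fin n → α) (g : Fin m → Fin n × α) :
    X ∈ lruRun (n + 1) []
        (X :: (List.ofFn (fun i => L (i, f i)) ++ List.ofFn (fun j => L (g j)))) ↔
      ∀ j, f (g j).1 = (g j).2 := by
  have hnodup : (X :: List.ofFn fun i => L (i, f i)).Nodup := by
    refine List.nodup_cons.mpr ⟨by simp [List.mem_ofFn, hX], List.nodup_ofFn.mpr ?_⟩
    exact hL.comp fun _ _ h => congrArg Prod.fst h
  have hXg : X ∉ List.ofFn fun j => L (g j) := by simp [List.mem_ofFn, hX]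
  have hmem (l : Fin n × α) : L l ∈ List.ofFn (fun i => L (i, f i)) ↔ f l.1 = l.2 := by
    simp [List.mem_ofFn, hL.eq_iff, Prod.ext_iff]
  have hsurvives := mem_lruRun_nil_cons_append_iff_subset hnodup hXg
  rw [List.length_ofFn] at hsurvives
  simp only [hsurvives, List.subset_def, List.forall_mem_ofFn_iff, hmem]

theorem lru_exist_hit_sat_reduction_general (hL : Function.Injective L) (hX : ∀ l, L l ≠ X)
    (C : Fin m → Set (Fin n × α)) :
    (∃ v : Fin n → α, ∀ j, ∃ l ∈ C j, v l.1 = l.2) ↔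
      ∃ (f : Fin n → α) (g : Fin m → Fin n × α), (∀ j, g j ∈ C j) ∧
        X ∈ lruRun (n + 1) []
          (X :: (List.ofFn (fun i => L (i, f i)) ++ List.ofFn (fun j => L (g j)))) := by
  simp only [mem_lruRun_ofFn_append_ofFn_iff hL hX, Classical.skolem, forall_and]

end Reduction

/-- correctness of the reduction from CNF-SAT to the LRU exist-hit
problem.  Blocks are `Option (Fin n × Bool)`: `none` is the distinguished block
`X` and `some (i, b)` is the block `L(i,b)`. -/
theorem lru_exist_hit_sat_reduction (n m : ℕ) (C : Fin m → Finset (Fin n × Bool)) :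
    (∃ v : Fin n → Bool, ∀ j : Fin m, ∃ l ∈ C j, v l.1 = l.2) ↔
    (∃ (f : Fin n → Bool) (g : Fin m → Fin n × Bool),
      (∀ j : Fin m, g j ∈ C j) ∧
      (none : Option (Fin n × Bool)) ∈
        lruRun (n + 1) ([] : List (Option (Fin n × Bool)))
          (none :: (List.ofFn (fun i : Fin n => some (i, f i)) ++
                    List.ofFn (fun j : Fin m => some (g j))))) :=
  lru_exist_hit_sat_reduction_general (Option.some_injective _) Option.some_ne_none
    fun j => (C j : Set (Fin n × Bool))
end

section
/- Let V and B be finite types and E : V → B → V → Prop an edge-labeled directed multigraph. For all v₁ v₂ : V, if there is a walk from v₁ to v₂ with trace t, then there is a walk from v₁ to v₂ with trace t' such that t'.toFinset = t.toFinset (the same set of memory blocks is accessed) and t'.length ≤ Fintype.card V * Fintype.card B. -/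
/-- `Walk E u v t`: there is a walk from `u` to `v` in the edge-labeled directed
multigraph `E` whose list of edge labels, in order, is `t`. -/
inductive Walk {V B : Type*} (E : V → B → V → Prop) : V → V → List B → Prop
  | nil (v : V) : Walk E v v []
  | cons {u v w : V} {b : B} {t : List B} :
      E u b v → Walk E v w t → Walk E u w (b :: t)

/-!
Cut a nonempty trace at the last edge whose label has not occurred before. The part before the cut
misses exactly one label, so it can be shortened by induction. The part after the cut brings no new
label, so all its cycles may be removed, leaving fewer than `card V` edges; with the cut edge this
costs at most `card V` edges per label.
-/

theorem exists_append_cons_notMem_subset {α : Type*} {l : List α} (hl : l ≠ []) :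
    ∃ p a q, l = p ++ a :: q ∧ a ∉ p ∧ q ⊆ a :: p := by
  induction l using List.reverseRecOn with
  | nil => exact absurd rfl hl
  | append_singleton l c ih =>
    by_cases hc : c ∈ l
    · obtain ⟨p, a, q, rfl, hap, hq⟩ := ih (List.ne_nil_of_mem hc)
      have hcp : c ∈ a :: p := by
        rcases List.mem_append.1 hc with hc | hc
        · exact List.mem_cons_of_mem a hc
        · exact List.cons_subset.2 ⟨List.mem_cons_self, hq⟩ hc
      exact ⟨p, a, q ++ [c], by simp, hap, List.append_subset.2 ⟨hq, by simpa using hcp⟩⟩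
    · exact ⟨l, c, [], rfl, hc, List.nil_subset _⟩

theorem toFinset_append_cons_eq_insert {α : Type*} [DecidableEq α] {l p q : List α} {a : α}
    (hp : p.toFinset = l.toFinset) (hq : q ⊆ a :: l) :
    (p ++ a :: q).toFinset = insert a l.toFinset := by
  have hq' : q.toFinset ⊆ insert a l.toFinset := fun c hc => by
    simpa using hq (List.mem_toFinset.1 hc)
  rw [List.toFinset_append, List.toFinset_cons, hp, Finset.union_insert, ← Finset.insert_union,
    Finset.union_eq_left.2 hq']

namespace Walk

variable {V B : Type*} {E : V → B → V → Prop} {u v w : V} {s t : List B}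

theorem append (hs : Walk E u v s) (ht : Walk E v w t) : Walk E u w (s ++ t) := by
  induction hs with
  | nil => exact ht
  | cons e _ ih => exact cons e (ih ht)

theorem exists_of_append (h : Walk E u w (s ++ t)) : ∃ v, Walk E u v s ∧ Walk E v w t := by
  induction s generalizing u with
  | nil => exact ⟨u, nil u, h⟩
  | cons b s ih =>
    cases h with
    | cons e h =>
      obtain ⟨v, hs, ht⟩ := ih h
      exact ⟨v, cons e hs, ht⟩

theorem exists_shorter_sublist [Fintype V] (h : Walk E u w t) (ht : Fintype.card V ≤ t.length) :
    ∃ s, Walk E u w s ∧ s.Sublist t ∧ s.length < t.length := by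
  have hvertex (i : Fin (t.length + 1)) : ∃ x, Walk E u x (t.take i) ∧ Walk E x w (t.drop i) :=
    exists_of_append (by rwa [List.take_append_drop])
  choose vertex hprefix hsuffix using hvertex
  obtain ⟨i, j, hij, hvertex_eq⟩ : ∃ i j, i < j ∧ vertex i = vertex j := by
    obtain ⟨i, j, hne, heq⟩ :=
      Fintype.exists_ne_map_eq_of_card_lt vertex (by simpa [Nat.lt_succ_iff] using ht)
    rcases hne.lt_or_gt with hij | hji
    · exact ⟨i, j, hij, heq⟩
    · exact ⟨j, i, hji, heq.symm⟩
  refine ⟨t.take i ++ t.drop j, (hprefix i).append (hvertex_eq ▸ hsuffix j), ?_, ?_⟩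
  · calc
      (t.take i ++ t.drop j).Sublist (t.take i ++ t.drop i) :=
        (List.drop_sublist_drop_left t hij.le).append_left _
      _ = t := List.take_append_drop _ _
  · simp only [List.length_append, List.length_take, List.length_drop]
    omega

theorem exists_sublist_length_lt_card [Fintype V] (h : Walk E u w t) :
    ∃ s, Walk E u w s ∧ s.Sublist t ∧ s.length < Fintype.card V := by
  induction hn : t.length using Nat.strong_induction_on generalizing t with
  | _ n ih =>
    subst hn
    rcases lt_or_ge t.length (Fintype.card V) with hlt | hge
    · exact ⟨t, h, List.Sublist.refl t, hlt⟩
    · obtain ⟨s, hs, hst, hlen⟩ := h.exists_shorter_sublist hge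
      obtain ⟨r, hr, hrs, hcard⟩ := ih s.length hlen hs rfl
      exact ⟨r, hr, hrs.trans hst, hcard⟩

end Walk

theorem walk_same_blocks_short_general {V B : Type*} [Fintype V] [DecidableEq B]
    (E : V → B → V → Prop) (v₁ v₂ : V) (t : List B) (hwalk : Walk E v₁ v₂ t) :
    ∃ t' : List B, Walk E v₁ v₂ t' ∧ t'.Sublist t ∧ t'.toFinset = t.toFinset ∧
      t'.length ≤ Fintype.card V * t.toFinset.card := by
  induction hn : t.length using Nat.strong_induction_on generalizing v₂ t with
  | _ n ih =>
    rcases eq_or_ne t [] with rfl | ht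
    · exact ⟨[], hwalk, List.Sublist.refl [], rfl, Nat.zero_le _⟩
    obtain ⟨p, b, q, rfl, hbp, hq⟩ := exists_append_cons_notMem_subset ht
    obtain ⟨x, hwalk_p, hwalk_bq⟩ := hwalk.exists_of_append
    obtain _ | ⟨hedge, hwalk_q⟩ := hwalk_bq
    have hp_lt : p.length < n := by simp [← hn]
    obtain ⟨p', hwalk_p', hp', hlabels, hp'_length⟩ := ih p.length hp_lt x p hwalk_p rfl
    obtain ⟨q', hwalk_q', hq', hq'_length⟩ := hwalk_q.exists_sublist_length_lt_card
    have hlabels_pq : (p ++ b :: q).toFinset = insert b p.toFinset :=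
      toFinset_append_cons_eq_insert rfl hq
    have hlabels_pq' : (p' ++ b :: q').toFinset = insert b p.toFinset :=
      toFinset_append_cons_eq_insert hlabels (List.Subset.trans hq'.subset hq)
    refine ⟨p' ++ b :: q', hwalk_p'.append (.cons hedge hwalk_q'), hp'.append (hq'.cons_cons b),
      hlabels_pq'.trans hlabels_pq.symm, ?_⟩
    calc
      (p' ++ b :: q').length = p'.length + (q'.length + 1) := List.length_append
      _ ≤ Fintype.card V * p.toFinset.card + Fintype.card V := Nat.add_le_add hp'_length hq'_length
      _ = Fintype.card V * (p ++ b :: q).toFinset.card := by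
        rw [hlabels_pq, Finset.card_insert_of_notMem (by simpa using hbp), Nat.mul_succ]

/-- from any walk one can extract a walk between the same vertices
that accesses exactly the same set of blocks and has length at most
`Fintype.card V * Fintype.card B`. -/
theorem walk_same_blocks_short {V B : Type*} [Fintype V] [Fintype B] [DecidableEq B]
    (E : V → B → V → Prop) (v₁ v₂ : V) (t : List B) (hwalk : Walk E v₁ v₂ t) :
    ∃ t' : List B, Walk E v₁ v₂ t' ∧ t'.toFinset = t.toFinset ∧
      t'.length ≤ Fintype.card V * Fintype.card B := by
  obtain ⟨t', hwalk', -, hlabels, hlength⟩ := walk_same_blocks_short_general E v₁ v₂ t hwalk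
  exact ⟨t', hwalk', hlabels, hlength.trans (Nat.mul_le_mul_left _ (Finset.card_le_univ _))⟩
end

section
/- Let N ≥ 1, let w be a legal LRU state (a list of pairwise distinct blocks of length at most N), and let fs be a list of N pairwise distinct blocks none of which occurs in w. Then lruRun N w fs = fs. (Prepending N accesses to fresh pairwise distinct blocks brings an LRU cache from an arbitrary legal initial state to one fixed, completely known state; this reduces LRU analysis problems with arbitrary initial cache state to the same problems with empty initial cache state.) -/
/-!
If `p` is a suffix of the state shorter than the associativity, an access to a block `a ∉ p` leaves
`p` intact: a hit erases a block in front of `p`, and an eviction removes the oldest block, which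
also lies in front of `p`. Hence pairwise distinct accesses accumulate as a suffix of the state, and
once there are `N` of them they fill the cache.
-/

section Suffix

variable {α : Type*} {p w : List α}

theorem suffix_erase_of_notMem [BEq α] [LawfulBEq α] {a : α} (hp : p <:+ w)
    (ha : a ∉ p) : p <:+ w.erase a := by
  obtain ⟨u, rfl⟩ := hp
  by_cases hu : a ∈ u
  · rw [List.erase_append_left p hu]
    exact List.suffix_append ..
  · rw [List.erase_of_not_mem (by simp [hu, ha])]
    exact List.suffix_append ..

theorem suffix_tail_of_length_lt (hp : p <:+ w) (hlt : p.length < w.length) : p <:+ w.tail :=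
  List.suffix_of_suffix_length_le hp w.tail_suffix (by grind)

end Suffix

section LRU

variable {B : Type*} [DecidableEq B] {N : ℕ}

theorem length_lruAccess_le (hN : 1 ≤ N) {w : List B} (hw : w.length ≤ N) (a : B) :
    (lruAccess N w a).length ≤ N := by
  unfold lruAccess
  split_ifs <;> grind

theorem append_singleton_suffix_lruAccess {p w : List B} {a : B} (hp : p <:+ w)
    (ha : a ∉ p) (hlt : p.length < N) : p ++ [a] <:+ lruAccess N w a := by
  unfold lruAccess
  split_ifs with hit hroom
  · exact List.suffix_append_self_iff.mpr (suffix_erase_of_notMem hp ha)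
  · exact List.suffix_append_self_iff.mpr hp
  · exact List.suffix_append_self_iff.mpr (suffix_tail_of_length_lt hp (by lia))

theorem lruRun_concat (N : ℕ) (w t : List B) (a : B) :
    lruRun N w (t ++ [a]) = lruAccess N (lruRun N w t) a :=
  List.foldl_concat ..

theorem length_lruRun_le (hN : 1 ≤ N) {w : List B} (hw : w.length ≤ N) (t : List B) :
    (lruRun N w t).length ≤ N := by
  induction t using List.reverseRecOn with
  | nil => exact hw
  | append_singleton t a ih =>
    rw [lruRun_concat]
    exact length_lruAccess_le hN ih a

theorem suffix_lruRun_of_nodup (w : List B) {t : List B} (ht : t.Nodup) (hlen : t.length ≤ N) :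
    t <:+ lruRun N w t := by
  induction t using List.reverseRecOn with
  | nil => exact List.nil_suffix
  | append_singleton t a ih =>
    obtain ⟨ht, ha⟩ : t.Nodup ∧ a ∉ t := by grind
    have hlt : t.length < N := by simpa using hlen
    rw [lruRun_concat]
    exact append_singleton_suffix_lruAccess (ih ht hlt.le) ha hlt

end LRU

theorem lru_fresh_accesses_reset_general {B : Type*} [DecidableEq B] (N : ℕ) (hN : 1 ≤ N)
    (w fs : List B) (hw_len : w.length ≤ N) (hfs_nodup : fs.Nodup) (hfs_len : fs.length = N) :
    lruRun N w fs = fs := by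
  have hsuffix : fs <:+ lruRun N w fs := suffix_lruRun_of_nodup w hfs_nodup hfs_len.le
  have hlen : (lruRun N w fs).length ≤ fs.length :=
    (length_lruRun_le hN hw_len fs).trans_eq hfs_len.symm
  exact (hsuffix.eq_of_length_le hlen).symm

/-- accessing `N` pairwise distinct fresh blocks brings an LRU
cache from any legal state to the fixed, completely known state `fs`. -/
theorem lru_fresh_accesses_reset {B : Type*} [DecidableEq B] (N : ℕ) (hN : 1 ≤ N)
    (w fs : List B) (hw_nodup : w.Nodup) (hw_len : w.length ≤ N)
    (hfs_nodup : fs.Nodup) (hfs_len : fs.length = N)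
    (hfresh : ∀ x ∈ fs, x ∉ w) :
    lruRun N w fs = fs :=
  lru_fresh_accesses_reset_general N hN w fs hw_len hfs_nodup hfs_len
end

section
/- Let E = [a(1,false), a(2,false), …, a(r,false), c(1), c(2), …, c(r)]. (i) If w is an NMRU state well-formed at step 0 corresponding to the constant-false valuation, then nmruRun (2r+3) w E has the form c(1)^1 … c(r)^1 d^0 a(τ(1),false)^1 … a(τ(r),false)^1 g₀^0 g₁^1 for some permutation τ of {1,…,r}; in particular the block d belongs to the resulting cache state. (ii) If w is an NMRU state well-phased at step 0 but not well-formed at step 0 corresponding to any valuation, then the block d does not belong to nmruRun (2r+3) w E. (This is the correctness of the epilogue of the reduction from Boolean register machine reachability to the NMRU exist-hit problem.) -/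
/-!
Accesses that never exhaust the MRU-bits 0 obey two simple rules: a hit sets one bit to 1, and a
miss overwrites the leftmost entry of bit 0. Hence a block `d` of bit 0 that is not accessed itself
is evicted by the `n`-th miss at the latest as soon as fewer than `n` entries to its left have
bit 0, and accesses of blocks other than `d` never increase the number of those entries.

In a well-phased state there are `r` such entries, and `c(1) … c(r)` are `r` misses; so `d` is
evicted unless all of these entries keep bit 0 during `a(1,f) … a(r,f)`. This happens only if each
`a(i,f)` is a hit to the right of `d`; as there are just `r` places there, the `a(i,f)` fill them
and the state is well-formed for the constant valuation `f`. In that case `c(1) … c(r)` overwrite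
exactly the blocks `e(j)`, and `d` survives.
-/

/-- Set all MRU-bits to 0 except the one of block `a`. -/
def nmruReset {B : Type*} [DecidableEq B] (a : B) (w : List (B × Bool)) :
    List (B × Bool) :=
  w.map fun p => if p.1 = a then p else (p.1, false)

/-- If all MRU-bits are 1, reset all of them to 0 except the one of `a`. -/
def nmruNormalize {B : Type*} [DecidableEq B] (a : B) (w : List (B × Bool)) :
    List (B × Bool) :=
  if w.all (fun p => p.2) then nmruReset a w else w

/-- Replace the leftmost entry with MRU-bit 0 by `(a, 1)`. -/
def nmruReplace {B : Type*} [DecidableEq B] (a : B) :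
    List (B × Bool) → List (B × Bool)
  | [] => []
  | p :: rest => if p.2 = false then (a, true) :: rest else p :: nmruReplace a rest

/-- One access to an NMRU cache of associativity `N`: on a hit the block's
MRU-bit is set to 1; on a miss `(a,1)` is appended if the cache is not full,
and otherwise the leftmost entry with MRU-bit 0 is replaced by `(a,1)`; if this
would make all `N` MRU-bits equal to 1, all MRU-bits other than `a`'s are set
to 0 instead. -/
def nmruAccess {B : Type*} [DecidableEq B] (N : ℕ) (w : List (B × Bool)) (a : B) :
    List (B × Bool) :=
  if a ∈ w.map Prod.fst then
    nmruNormalize a (w.map fun p => if p.1 = a then (a, true) else p)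
  else if w.length < N then w ++ [(a, true)]
  else nmruNormalize a (nmruReplace a w)

/-- Process a list of accesses in order, starting from state `w`. -/
def nmruRun {B : Type*} [DecidableEq B] (N : ℕ) (w : List (B × Bool)) (t : List B) :
    List (B × Bool) :=
  t.foldl (nmruAccess N) w

/-- Block alphabet of the NMRU reduction: blocks `a(i,b)`, `e(i)`, `c(i)` for
`i : Fin r` (representing indices `1,…,r`), and `d`, `g₀`, `g₁`. -/
inductive NBlk (r : ℕ) where
  | a (i : Fin r) (b : Bool)
  | e (i : Fin r)
  | c (i : Fin r)
  | d
  | g0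
  | g1
  deriving DecidableEq

/-- An NMRU state is well-formed at step `s` (the MRU-bit of `g₀`),
corresponding to `σ`, if it has the form
`e(τ'(1))⁰ … e(τ'(r))⁰ d⁰ a(τ(1),σ(τ(1)))⁰ … a(τ(r),σ(τ(r)))⁰ g₀ˢ g₁^(1-s)`
for some permutations `τ`, `τ'` of `{1,…,r}`. -/
def WellFormedN (r : ℕ) (s : Bool) (σ : Fin r → Bool)
    (w : List (NBlk r × Bool)) : Prop :=
  ∃ τ τ' : Equiv.Perm (Fin r),
    w = (List.ofFn fun i : Fin r => (NBlk.e (τ' i), false)) ++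
        [(NBlk.d, false)] ++
        (List.ofFn fun i : Fin r => (NBlk.a (τ i) (σ (τ i)), false)) ++
        [(NBlk.g0, s), (NBlk.g1, !s)]

/-- An NMRU state is well-phased at step `s` if it has the form
`γ_{ρ(1)}⁰ … γ_{ρ(r)}⁰ d⁰ γ_{ρ(r+1)}⁰ … γ_{ρ(2r)}⁰ g₀ˢ g₁^(1-s)`, where the
`γ`'s are the `r` blocks `e(j)` together with `r` blocks `a(j, b_j)` (one for
each `j`) and `ρ` is a permutation of `{1,…,2r}`. -/
def WellPhasedN (r : ℕ) (s : Bool) (w : List (NBlk r × Bool)) : Prop :=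
  ∃ (b : Fin r → Bool) (l₁ l₂ : List (NBlk r)),
    l₁.length = r ∧ l₂.length = r ∧
    (l₁ ++ l₂).Perm
      ((List.ofFn fun i : Fin r => NBlk.e i) ++
       (List.ofFn fun i : Fin r => NBlk.a i (b i))) ∧
    w = (l₁.map fun x => (x, false)) ++ [(NBlk.d, false)] ++
        (l₂.map fun x => (x, false)) ++ [(NBlk.g0, s), (NBlk.g1, !s)]

/-- The epilogue access sequence `E = a(1,f) … a(r,f) c(1) … c(r)`. -/
def epilogueE (r : ℕ) : List (NBlk r) :=
  (List.ofFn fun i : Fin r => NBlk.a i false) ++ (List.ofFn fun i : Fin r => NBlk.c i)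

namespace NMRU

variable {B : Type*} {r N n : ℕ} {x d : B} {t : List B} {w L R : List (B × Bool)}

/-- The number of entries of MRU-bit 0. -/
def zeroCount (w : List (B × Bool)) : ℕ :=
  w.countP fun p => !p.2

lemma zeroCount_map_false (l : List B) :
    zeroCount (l.map fun x => (x, false)) = l.length := by
  simp [zeroCount, Function.comp_def]

lemma exists_perm_eq_ofFn_of_perm_ofFn {f : Fin r → B} {l : List B}
    (h : l.Perm (List.ofFn f)) :
    ∃ τ : Equiv.Perm (Fin r), l = List.ofFn fun i => f (τ i) := by
  classical
  obtain rfl : l.length = r := by simpa using h.length_eq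
  have hinj : Function.Injective fun i => Fin.cast List.length_ofFn (h.idxBij i) :=
    (Fin.cast_injective _).comp h.subperm.idxInj_injective
  refine ⟨Equiv.ofBijective _ (Finite.injective_iff_bijective.1 hinj), ?_⟩
  refine List.ext_getElem (by simp) fun i hi _ => ?_
  rw [List.getElem_ofFn]
  exact (h.getElem_idxBij_eq_getElem ⟨i, hi⟩).symm.trans (List.getElem_ofFn _)

/-- Block `d` is not in the cache, or it is there once, with MRU-bit 0 and fewer than `n` entries
of MRU-bit 0 to its left. In a full cache `n` misses are then enough to evict `d`. -/
def EvictableWithin (d : B) (n : ℕ) (w : List (B × Bool)) : Prop :=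
  d ∉ w.map Prod.fst ∨
    ∃ L R, w = L ++ (d, false) :: R ∧ d ∉ (L ++ R).map Prod.fst ∧ zeroCount L < n

lemma evictableWithin_zero_iff : EvictableWithin d 0 w ↔ d ∉ w.map Prod.fst := by
  simp [EvictableWithin]

lemma EvictableWithin.mono {m : ℕ} (h : EvictableWithin d m w) (hmn : m ≤ n) :
    EvictableWithin d n w :=
  h.imp_right fun ⟨L, R, hw, hd, hL⟩ => ⟨L, R, hw, hd, hL.trans_le hmn⟩

variable [DecidableEq B]

/-- Set the MRU-bits of all blocks of `t` to 1: the effect of hits on the blocks of `t`, as long as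
some MRU-bit remains 0. -/
def touch (t : List B) (w : List (B × Bool)) : List (B × Bool) :=
  w.map fun p => if p.1 ∈ t then (p.1, true) else p

lemma map_fst_touch (t : List B) (w : List (B × Bool)) :
    (touch t w).map Prod.fst = w.map Prod.fst := by
  rw [touch, List.map_map]
  exact List.map_congr_left fun p _ => by dsimp; split <;> rfl

lemma touch_nil (w : List (B × Bool)) : touch [] w = w := by simp [touch]

lemma touch_touch (s t : List B) (w : List (B × Bool)) :
    touch t (touch s w) = touch (s ++ t) w := by
  rw [touch, touch, touch, List.map_map]
  exact List.map_congr_left fun p _ => by grind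

lemma touch_append (t : List B) (L R : List (B × Bool)) :
    touch t (L ++ R) = touch t L ++ touch t R :=
  List.map_append

lemma touch_cons_of_notMem (hd : d ∉ t) (b : Bool) (R : List (B × Bool)) :
    touch t ((d, b) :: R) = (d, b) :: touch t R := by
  simp [touch, hd]

lemma touch_eq_self (h : t.Disjoint (w.map Prod.fst)) : touch t w = w :=
  (List.map_congr_left fun _ hp => if_neg fun hpt => h hpt (List.mem_map_of_mem hp)).trans
    (List.map_id w)

lemma zeroCount_touch_le (t : List B) (w : List (B × Bool)) :
    zeroCount (touch t w) ≤ zeroCount w := by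
  rw [zeroCount, touch, List.countP_map]
  exact List.countP_mono_left fun p _ => by dsimp; split <;> simp

lemma zeroCount_touch_lt (hxt : x ∈ t) (hxw : (x, false) ∈ w) :
    zeroCount (touch t w) < zeroCount w := by
  obtain ⟨L, R, rfl⟩ := List.append_of_mem hxw
  have hL := zeroCount_touch_le t L
  have hR := zeroCount_touch_le t R
  simp only [zeroCount, touch, List.map_append, List.map_cons, List.countP_append,
    List.countP_cons, hxt, if_true, Bool.not_true, Bool.not_false, Bool.false_eq_true,
    if_false] at hL hR ⊢
  omega

lemma map_fst_nmruNormalize (x : B) (w : List (B × Bool)) :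
    (nmruNormalize x w).map Prod.fst = w.map Prod.fst := by
  unfold nmruNormalize nmruReset
  split
  · rw [List.map_map]
    exact List.map_congr_left fun p _ => by dsimp; split <;> rfl
  · rfl

lemma nmruNormalize_of_mem (x : B) (h : (d, false) ∈ w) : nmruNormalize x w = w :=
  if_neg fun hall => by simpa using List.all_eq_true.1 hall _ h

lemma length_nmruReplace (x : B) (w : List (B × Bool)) :
    (nmruReplace x w).length = w.length := by
  induction w with
  | nil => rfl
  | cons p w ih => simp only [nmruReplace]; split <;> simp [ih]

lemma map_fst_nmruReplace_subset (x : B) (w : List (B × Bool)) :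
    (nmruReplace x w).map Prod.fst ⊆ x :: w.map Prod.fst := by
  induction w with
  | nil => simp [nmruReplace]
  | cons p w ih => simp only [nmruReplace]; split <;> grind

lemma nmruReplace_append_of_zeroCount_eq_zero (x d : B) (R : List (B × Bool))
    (hL : zeroCount L = 0) :
    nmruReplace x (L ++ (d, false) :: R) = L ++ (x, true) :: R := by
  induction L with
  | nil => simp [nmruReplace]
  | cons p L ih =>
    obtain ⟨y, _ | _⟩ := p
    · simp [zeroCount] at hL
    · simpa [zeroCount, nmruReplace] using ih (by simpa [zeroCount] using hL)

lemma nmruReplace_append_of_zeroCount_pos (x : B) (R : List (B × Bool))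
    (hL : 0 < zeroCount L) :
    nmruReplace x (L ++ R) = nmruReplace x L ++ R := by
  induction L with
  | nil => simp [zeroCount] at hL
  | cons p L ih =>
    obtain ⟨y, _ | _⟩ := p
    · simp [nmruReplace]
    · simpa [nmruReplace] using ih (by simpa [zeroCount] using hL)

lemma zeroCount_nmruReplace (x : B) (w : List (B × Bool)) :
    zeroCount (nmruReplace x w) = zeroCount w - 1 := by
  induction w with
  | nil => rfl
  | cons p w ih =>
    obtain ⟨y, _ | _⟩ := p
    · simp [zeroCount, nmruReplace]
    · simpa [zeroCount, nmruReplace] using ih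

lemma map_fst_nmruAccess_subset (N : ℕ) (w : List (B × Bool)) (x : B) :
    (nmruAccess N w x).map Prod.fst ⊆ x :: w.map Prod.fst := by
  unfold nmruAccess
  split_ifs
  · rw [map_fst_nmruNormalize, List.map_map]
    grind
  · grind
  · rw [map_fst_nmruNormalize]
    exact map_fst_nmruReplace_subset x w

lemma length_nmruAccess (hN : N ≤ w.length) (x : B) :
    (nmruAccess N w x).length = w.length := by
  have length_normalize (v : List (B × Bool)) : (nmruNormalize x v).length = v.length := by
    simpa using congrArg List.length (map_fst_nmruNormalize x v)
  unfold nmruAccess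
  rw [if_neg hN.not_gt]
  split_ifs
  · rw [length_normalize, List.length_map]
  · rw [length_normalize, length_nmruReplace]

lemma nmruAccess_of_mem (N : ℕ) (hx : x ∈ w.map Prod.fst) (hd : (d, false) ∈ w) (hdx : d ≠ x) :
    nmruAccess N w x = touch [x] w := by
  have htouch : (w.map fun p => if p.1 = x then (x, true) else p) = touch [x] w :=
    List.map_congr_left fun p _ => by grind
  rw [nmruAccess, if_pos hx, htouch, nmruNormalize_of_mem (d := d)]
  exact List.mem_map.2 ⟨_, hd, by simp [hdx]⟩

lemma nmruAccess_of_notMem (hN : N ≤ w.length) (hx : x ∉ w.map Prod.fst) :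
    nmruAccess N w x = nmruNormalize x (nmruReplace x w) := by
  rw [nmruAccess, if_neg hx, if_neg hN.not_gt]

lemma nmruRun_cons (N : ℕ) (w : List (B × Bool)) (x : B) (t : List B) :
    nmruRun N w (x :: t) = nmruRun N (nmruAccess N w x) t :=
  rfl

lemma nmruRun_append (N : ℕ) (w : List (B × Bool)) (s t : List B) :
    nmruRun N w (s ++ t) = nmruRun N (nmruRun N w s) t :=
  List.foldl_append

lemma map_fst_nmruRun_subset (N : ℕ) (w : List (B × Bool)) (t : List B) :
    (nmruRun N w t).map Prod.fst ⊆ t ++ w.map Prod.fst := by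
  induction t generalizing w with
  | nil => simp [nmruRun]
  | cons x t ih =>
    have haccess := map_fst_nmruAccess_subset N w x
    have hrun := ih (nmruAccess N w x)
    rw [nmruRun_cons]
    grind

lemma length_nmruRun (hN : N ≤ w.length) (t : List B) :
    (nmruRun N w t).length = w.length := by
  induction t generalizing w with
  | nil => rfl
  | cons x t ih =>
    have hlen := length_nmruAccess hN x
    rw [nmruRun_cons, ih (hlen ▸ hN), hlen]

lemma disjoint_map_fst_nmruAccess (N : ℕ) (hnd : (x :: t).Nodup)
    (h : (x :: t).Disjoint (w.map Prod.fst)) :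
    t.Disjoint ((nmruAccess N w x).map Prod.fst) := by
  intro y hyt hy
  rcases List.mem_cons.1 (map_fst_nmruAccess_subset N w x hy) with rfl | hyw
  · exact (List.nodup_cons.1 hnd).1 hyt
  · exact h (List.mem_cons_of_mem _ hyt) hyw

lemma nmruRun_of_subset (N : ℕ) (ht : t ⊆ w.map Prod.fst) (hd : (d, false) ∈ w) (hdt : d ∉ t) :
    nmruRun N w t = touch t w := by
  induction t generalizing w with
  | nil => exact (touch_nil w).symm
  | cons x t ih =>
    obtain ⟨hdx, hdt⟩ := List.ne_and_not_mem_of_not_mem_cons hdt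
    obtain ⟨hx, ht⟩ := List.cons_subset.1 ht
    rw [nmruRun_cons, nmruAccess_of_mem N hx hd hdx, ih _ _ hdt, touch_touch, List.singleton_append]
    · rwa [map_fst_touch]
    · exact List.mem_map.2 ⟨_, hd, by simp [hdx]⟩

lemma nmruRun_of_disjoint {l : List B} (hl : l.length = t.length) (hnd : t.Nodup)
    (hL : zeroCount L = 0) (hN : N ≤ (L ++ l.map (·, false) ++ (d, false) :: R).length)
    (ht : t.Disjoint ((L ++ l.map (·, false) ++ (d, false) :: R).map Prod.fst)) :
    nmruRun N (L ++ l.map (·, false) ++ (d, false) :: R) t =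
      L ++ t.map (·, true) ++ (d, false) :: R := by
  induction t generalizing l L with
  | nil => simp [List.length_eq_zero_iff.1 hl, nmruRun]
  | cons x t ih =>
    obtain ⟨y, l, rfl⟩ := List.exists_cons_of_length_eq_add_one hl
    have haccess : nmruAccess N (L ++ (y :: l).map (·, false) ++ (d, false) :: R) x =
        (L ++ [(x, true)]) ++ l.map (·, false) ++ (d, false) :: R := by
      rw [nmruAccess_of_notMem hN (ht List.mem_cons_self), List.append_assoc, List.map_cons,
        List.cons_append, nmruReplace_append_of_zeroCount_eq_zero x y _ hL,
        nmruNormalize_of_mem (d := d) x (by simp)]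
      simp
    have hlen := length_nmruAccess hN x
    have hdisj := disjoint_map_fst_nmruAccess N hnd ht
    rw [haccess] at hlen hdisj
    rw [nmruRun_cons, haccess, ih (by simpa using hl) hnd.of_cons (by simpa [zeroCount] using hL)
      (hlen ▸ hN) hdisj]
    simp

namespace EvictableWithin

lemma access_of_notMem (h : EvictableWithin d (n + 1) w) (hdx : d ≠ x) (hN : N ≤ w.length)
    (hx : x ∉ w.map Prod.fst) : EvictableWithin d n (nmruAccess N w x) := by
  rcases h with hd | ⟨L, R, rfl, hd, hL⟩
  · exact .inl fun h => (List.mem_cons.1 (map_fst_nmruAccess_subset N w x h)).elim hdx hd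
  rw [nmruAccess_of_notMem hN hx]
  rcases Nat.eq_zero_or_pos (zeroCount L) with h0 | hpos
  · left
    rw [map_fst_nmruNormalize, nmruReplace_append_of_zeroCount_eq_zero x d R h0]
    grind
  · have hsub := map_fst_nmruReplace_subset x L
    have hzero := zeroCount_nmruReplace x L
    rw [nmruReplace_append_of_zeroCount_pos x _ hpos, nmruNormalize_of_mem (d := d) x (by simp)]
    exact .inr ⟨_, R, rfl, by grind, by omega⟩

lemma access (h : EvictableWithin d n w) (hdx : d ≠ x) (hN : N ≤ w.length) :
    EvictableWithin d n (nmruAccess N w x) := by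
  by_cases hx : x ∈ w.map Prod.fst
  · rcases h with hd | ⟨L, R, rfl, hd, hL⟩
    · exact .inl fun h => (List.mem_cons.1 (map_fst_nmruAccess_subset N w x h)).elim hdx hd
    · rw [nmruAccess_of_mem N hx (d := d) (by simp) hdx, touch_append,
        touch_cons_of_notMem (by simpa using hdx)]
      refine .inr ⟨_, _, rfl, ?_, (zeroCount_touch_le _ L).trans_lt hL⟩
      rwa [← touch_append, map_fst_touch]
  · exact (h.mono n.le_succ).access_of_notMem hdx hN hx

lemma run (h : EvictableWithin d n w) (hdt : d ∉ t) (hN : N ≤ w.length) :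
    EvictableWithin d n (nmruRun N w t) := by
  induction t generalizing w with
  | nil => exact h
  | cons x t ih =>
    obtain ⟨hdx, hdt⟩ := List.ne_and_not_mem_of_not_mem_cons hdt
    exact ih (h.access hdx hN) hdt (by rwa [length_nmruAccess hN])

lemma run_of_disjoint (h : EvictableWithin d (n + t.length) w) (hdt : d ∉ t) (hN : N ≤ w.length)
    (hnd : t.Nodup) (ht : t.Disjoint (w.map Prod.fst)) :
    EvictableWithin d n (nmruRun N w t) := by
  induction t generalizing w with
  | nil => exact h
  | cons x t ih =>
    obtain ⟨hdx, hdt⟩ := List.ne_and_not_mem_of_not_mem_cons hdt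
    exact ih (h.access_of_notMem hdx hN (ht List.mem_cons_self)) hdt
      (by rwa [length_nmruAccess hN]) hnd.of_cons (disjoint_map_fst_nmruAccess N hnd ht)

end EvictableWithin

section

variable {l : List B}

lemma evictableWithin_nmruAccess_of_mem_or_notMem
    (hN : N ≤ (l.map (·, false) ++ (d, false) :: R).length)
    (hd : d ∉ l ++ R.map Prod.fst) (hdx : d ≠ x) (hx : x ∈ l ∨ x ∉ R.map Prod.fst) :
    EvictableWithin d l.length (nmruAccess N (l.map (·, false) ++ (d, false) :: R) x) := by
  have hd' : d ∉ (l.map (·, false) ++ R).map Prod.fst := by simpa using hd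
  by_cases hxl : x ∈ l
  · rw [nmruAccess_of_mem N (by simp [hxl]) (d := d) (by simp) hdx, touch_append,
      touch_cons_of_notMem (by simpa using hdx)]
    refine .inr ⟨_, _, rfl, by rwa [← touch_append, map_fst_touch], ?_⟩
    calc zeroCount (touch [x] (l.map (·, false)))
      _ < zeroCount (l.map (·, false)) :=
        zeroCount_touch_lt (List.mem_singleton_self x) (List.mem_map_of_mem hxl)
      _ = l.length := zeroCount_map_false l
  · have h : EvictableWithin d (l.length + 1) (l.map (·, false) ++ (d, false) :: R) :=
      .inr ⟨_, R, rfl, hd', (zeroCount_map_false l).trans_lt l.length.lt_succ_self⟩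
    have hxR := hx.resolve_left hxl
    exact h.access_of_notMem hdx hN (by simpa [hxl, hdx.symm] using hxR)

lemma evictableWithin_nmruRun_of_not_subset
    (hN : N ≤ (l.map (·, false) ++ (d, false) :: R).length)
    (hd : d ∉ l ++ R.map Prod.fst) (hdt : d ∉ t) (ht : ¬ t ⊆ R.map Prod.fst) :
    EvictableWithin d l.length (nmruRun N (l.map (·, false) ++ (d, false) :: R) t) := by
  induction t generalizing R with
  | nil => simp at ht
  | cons x t ih =>
    obtain ⟨hdx, hdt⟩ := List.ne_and_not_mem_of_not_mem_cons hdt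
    have hlen := length_nmruAccess hN x
    rw [nmruRun_cons]
    by_cases hx : x ∈ l ∨ x ∉ R.map Prod.fst
    · exact (evictableWithin_nmruAccess_of_mem_or_notMem hN hd hdx hx).run hdt (hlen ▸ hN)
    · obtain ⟨hxl, hxR⟩ : x ∉ l ∧ x ∈ R.map Prod.fst := by simpa only [not_or, not_not] using hx
      have haccess : nmruAccess N (l.map (·, false) ++ (d, false) :: R) x =
          l.map (·, false) ++ (d, false) :: touch [x] R := by
        rw [nmruAccess_of_mem N (d := d) (by simp [hxR]) (by simp) hdx, touch_append,
          touch_cons_of_notMem (by simpa using hdx), touch_eq_self (by simpa using hxl)]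
      rw [haccess] at hlen ⊢
      refine ih (hlen ▸ hN) (by rwa [map_fst_touch]) hdt ?_
      rw [map_fst_touch]
      exact fun h => ht (List.cons_subset.2 ⟨hxR, h⟩)

end

lemma perm_ofFn_of_subset_right {b : Fin r → Bool} {l₁ l₂ : List (NBlk r)}
    (h₂ : l₂.length = r)
    (hperm : (l₁ ++ l₂).Perm (List.ofFn NBlk.e ++ List.ofFn fun i => NBlk.a i (b i)))
    (h : List.ofFn (fun i => NBlk.a i false) ⊆ l₂) :
    l₁.Perm (List.ofFn NBlk.e) ∧ l₂.Perm (List.ofFn fun i => NBlk.a i false) := by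
  have hb : b = fun _ => false := by
    funext i
    have hi : NBlk.a i false ∈ l₂ := h (List.mem_ofFn.2 ⟨i, rfl⟩)
    simpa using hperm.subset (List.mem_append_right l₁ hi)
  have hnd : (List.ofFn fun i : Fin r => NBlk.a i false).Nodup :=
    List.nodup_ofFn.2 fun i j hij => by simpa using hij
  have hl₂ := ((hnd.subperm h).perm_of_length_le (by simp [h₂])).symm
  subst hb
  exact ⟨(List.perm_append_right_iff _).1 ((hl₂.append_left l₁).symm.trans hperm), hl₂⟩

lemma wellFormedN_of_perm {s : Bool} {σ : Fin r → Bool} {l₁ l₂ : List (NBlk r)}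
    (h₁ : l₁.Perm (List.ofFn NBlk.e)) (h₂ : l₂.Perm (List.ofFn fun i => NBlk.a i (σ i))) :
    WellFormedN r s σ (l₁.map (·, false) ++ [(NBlk.d, false)] ++ l₂.map (·, false) ++
      [(NBlk.g0, s), (NBlk.g1, !s)]) := by
  obtain ⟨τ', rfl⟩ := exists_perm_eq_ofFn_of_perm_ofFn h₁
  obtain ⟨τ, rfl⟩ := exists_perm_eq_ofFn_of_perm_ofFn h₂
  exact ⟨τ, τ', by simp only [List.map_ofFn, Function.comp_def]⟩

lemma nodup_ofFn_c (r : ℕ) : (List.ofFn (NBlk.c (r := r))).Nodup :=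
  List.nodup_ofFn.2 fun i j hij => by simpa using hij

lemma exists_nmruRun_epilogueE_eq {s : Bool} {w : List (NBlk r × Bool)}
    (h : WellFormedN r s (fun _ => false) w) :
    ∃ τ : Equiv.Perm (Fin r),
      nmruRun (2 * r + 3) w (epilogueE r) =
        (List.ofFn fun i : Fin r => (NBlk.c i, true)) ++
        [(NBlk.d, false)] ++
        (List.ofFn fun i : Fin r => (NBlk.a (τ i) false, true)) ++
        [(NBlk.g0, s), (NBlk.g1, !s)] := by
  obtain ⟨τ, τ', rfl⟩ := h
  refine ⟨τ, ?_⟩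
  have hits := nmruRun_of_subset (2 * r + 3) (d := NBlk.d)
    (t := List.ofFn fun i => NBlk.a i false)
    (w := (List.ofFn fun i => (NBlk.e (τ' i), false)) ++ [(NBlk.d, false)] ++
      (List.ofFn fun i => (NBlk.a (τ i) false, false)) ++ [(NBlk.g0, s), (NBlk.g1, !s)])
    (by
      intro x hx
      obtain ⟨i, rfl⟩ := List.mem_ofFn.1 hx
      simpa using τ.surjective i)
    (by simp) (by simp)
  have misses := nmruRun_of_disjoint (N := 2 * r + 3) (L := []) (d := NBlk.d)
    (R := List.ofFn (fun i => (NBlk.a (τ i) false, true)) ++ [(NBlk.g0, s), (NBlk.g1, !s)])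
    (l := List.ofFn fun i => NBlk.e (τ' i)) (t := List.ofFn NBlk.c) (by simp) (nodup_ofFn_c r)
    rfl (by grind) (by simp [List.Disjoint])
  rw [epilogueE, nmruRun_append, hits]
  simpa [touch, List.map_ofFn, Function.comp_def] using misses

lemma d_notMem_nmruRun_epilogueE {s : Bool} {w : List (NBlk r × Bool)} (hw : WellPhasedN r s w)
    (hwf : ¬ WellFormedN r s (fun _ => false) w) :
    NBlk.d ∉ (nmruRun (2 * r + 3) w (epilogueE r)).map Prod.fst := by
  obtain ⟨b, l₁, l₂, h₁, h₂, hperm, rfl⟩ := hw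
  have hd : NBlk.d ∉ l₁ ++ l₂ := hperm.mem_iff.not.2 (by simp)
  let A : List (NBlk r) := List.ofFn fun i => NBlk.a i false
  have hA : ¬ A ⊆ l₂ := fun h =>
    have ⟨he, ha⟩ := perm_ofFn_of_subset_right h₂ hperm h
    hwf (wellFormedN_of_perm he ha)
  rw [List.append_assoc, List.append_assoc, List.singleton_append]
  let R : List (NBlk r × Bool) := l₂.map (·, false) ++ [(NBlk.g0, s), (NBlk.g1, !s)]
  let w : List (NBlk r × Bool) := l₁.map (·, false) ++ (NBlk.d, false) :: R
  have hN : 2 * r + 3 = w.length := by grind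
  have hAR : ¬ A ⊆ R.map Prod.fst := by simpa [A, R, List.subset_def] using hA
  have hevict : EvictableWithin NBlk.d l₁.length (nmruRun (2 * r + 3) w A) :=
    evictableWithin_nmruRun_of_not_subset hN.le (by simpa [R] using hd) (by simp [A]) hAR
  have hdisj : (List.ofFn NBlk.c).Disjoint ((nmruRun (2 * r + 3) w A).map Prod.fst) := by
    intro x hx hxw
    obtain ⟨i, rfl⟩ := List.mem_ofFn.1 hx
    have hmem : NBlk.c i ∈ l₁ ++ l₂ := by
      simpa [A, w, R, Function.comp_def] using map_fst_nmruRun_subset _ _ _ hxw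
    simpa using hperm.mem_iff.1 hmem
  rw [epilogueE, nmruRun_append, ← evictableWithin_zero_iff]
  exact EvictableWithin.run_of_disjoint (by simpa [h₁] using hevict) (by simp)
    (by rw [length_nmruRun hN.le, ← hN]) (nodup_ofFn_c r) hdisj

end NMRU

open NMRU in
theorem nmru_exist_hit_epilogue_general (r : ℕ) (s : Bool) (w : List (NBlk r × Bool)) :
    (WellFormedN r s (fun _ => false) w →
      (∃ τ : Equiv.Perm (Fin r),
        nmruRun (2 * r + 3) w (epilogueE r) =
          (List.ofFn fun i : Fin r => (NBlk.c i, true)) ++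
          [(NBlk.d, false)] ++
          (List.ofFn fun i : Fin r => (NBlk.a (τ i) false, true)) ++
          [(NBlk.g0, s), (NBlk.g1, !s)]) ∧
      NBlk.d ∈ (nmruRun (2 * r + 3) w (epilogueE r)).map Prod.fst) ∧
    (WellPhasedN r s w ∧ ¬ WellFormedN r s (fun _ => false) w →
      NBlk.d ∉ (nmruRun (2 * r + 3) w (epilogueE r)).map Prod.fst) := by
  refine ⟨fun h => ?_, fun ⟨hw, hwf⟩ => d_notMem_nmruRun_epilogueE hw hwf⟩
  obtain ⟨τ, hτ⟩ := exists_nmruRun_epilogueE_eq h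
  exact ⟨⟨τ, hτ⟩, by simp [hτ]⟩

/-- correctness of the epilogue of the reduction from Boolean
register machine reachability to the NMRU exist-hit problem (step 0 means that
the MRU-bit of `g₀` is `false`).  (i) On a state well-formed at step 0
corresponding to the constant-false valuation, `E` produces a state of the form
`c(1)¹ … c(r)¹ d⁰ a(τ(1),f)¹ … a(τ(r),f)¹ g₀⁰ g₁¹`, which contains `d`.
(ii) On a state well-phased at step 0 but not well-formed at step 0
corresponding to any valuation, `E` produces a state not containing `d`. -/
theorem nmru_exist_hit_epilogue (r : ℕ) (hr : 1 ≤ r) (w : List (NBlk r × Bool)) :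
    (WellFormedN r false (fun _ => false) w →
      (∃ τ : Equiv.Perm (Fin r),
        nmruRun (2 * r + 3) w (epilogueE r) =
          (List.ofFn fun i : Fin r => (NBlk.c i, true)) ++
          [(NBlk.d, false)] ++
          (List.ofFn fun i : Fin r => (NBlk.a (τ i) false, true)) ++
          [(NBlk.g0, false), (NBlk.g1, true)]) ∧
      NBlk.d ∈ (nmruRun (2 * r + 3) w (epilogueE r)).map Prod.fst) ∧
    ((WellPhasedN r false w ∧ ∀ σ : Fin r → Bool, ¬ WellFormedN r false σ w) →
      NBlk.d ∉ (nmruRun (2 * r + 3) w (epilogueE r)).map Prod.fst) :=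
  have ⟨survives, evicted⟩ := nmru_exist_hit_epilogue_general r false w
  ⟨survives, fun h => evicted ⟨h.1, h.2 _⟩⟩
end
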